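/- Let ψ∈C²(Ω) be Lipschitz continuous on Ω̄ with 0≤ψ≤Q, Δψ=f(ψ) in Ω, ψ=0 on Γ₀, ψ=Q on Γ₁, and ∂_{x₂}ψ≥0 in Ω. Then ψ converges to the one-dimensional solutions at far fields in C¹_loc: for every compact K⊂(0,1), sup_{x₂∈K}(|ψ(x₁,x₂)−φ̄₁(x₂)| + |∂_{x₂}ψ(x₁,x₂)−φ̄₁'(x₂)|) → 0 as x₁→−∞, and for every compact K⊂(a,b), sup_{x₂∈K}(|ψ(x₁,x₂)−φ̄_{b−a}(x₂−a)| + |∂_{x₂}ψ(x₁,x₂)−φ̄_{b−a}'(x₂−a)|) → 0 as x₁→+∞. -/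

import Mathlib

open Real Set MeasureTheory

noncomputable section

/-- Partial derivative in the `x₁` direction. -/
def pd1 (φ : ℝ × ℝ → ℝ) (x : ℝ × ℝ) : ℝ := fderiv ℝ φ x (1, 0)

/-- Partial derivative in the `x₂` direction. -/
def pd2 (φ : ℝ × ℝ → ℝ) (x : ℝ × ℝ) : ℝ := fderiv ℝ φ x (0, 1)

/-- The Laplacian `Δφ = ∂²φ/∂x₁² + ∂²φ/∂x₂²`. -/
def lap (φ : ℝ × ℝ → ℝ) (x : ℝ × ℝ) : ℝ := pd1 (pd1 φ) x + pd2 (pd2 φ) x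

/-- `φ` solves the boundary value problem `φ'' = f(φ)` on `(0,d)`, `φ(0) = 0`,
`φ(d) = Q`, `0 < φ < Q` on `(0,d)`, with `φ ∈ C²((0,d)) ∩ C¹([0,d])`. -/
def IsBVPSol (Q : ℝ) (f : ℝ → ℝ) (d : ℝ) (φ : ℝ → ℝ) : Prop :=
  ContDiffOn ℝ 1 φ (Set.Icc 0 d) ∧ ContDiffOn ℝ 2 φ (Set.Ioo 0 d) ∧
  (∀ x ∈ Set.Ioo (0 : ℝ) d, deriv (deriv φ) x = f (φ x)) ∧
  φ 0 = 0 ∧ φ d = Q ∧ (∀ x ∈ Set.Ioo (0 : ℝ) d, 0 < φ x ∧ φ x < Q)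

open Filter Topology

/-- `g` is differentiable near `x` and its derivative has derivative `A` at `x`. -/
def HasSecondDerivAt (g : ℝ → ℝ) (A x : ℝ) : Prop :=
  ∃ p : ℝ → ℝ, (∀ᶠ s in 𝓝 x, HasDerivAt g (p s) s) ∧ HasDerivAt p A x

namespace HasSecondDerivAt

variable {g k : ℝ → ℝ} {A B x : ℝ}

lemma add (hg : HasSecondDerivAt g A x) (hk : HasSecondDerivAt k B x) :
    HasSecondDerivAt (fun s => g s + k s) (A + B) x := by
  obtain ⟨p, hp, hp'⟩ := hg
  obtain ⟨q, hq, hq'⟩ := hk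
  refine ⟨fun s => p s + q s, ?_, hp'.add hq'⟩
  filter_upwards [hp, hq] with s h1 h2 using h1.add h2

lemma const_mul (c : ℝ) (hg : HasSecondDerivAt g A x) :
    HasSecondDerivAt (fun s => c * g s) (c * A) x := by
  obtain ⟨p, hp, hp'⟩ := hg
  refine ⟨fun s => c * p s, ?_, hp'.const_mul c⟩
  filter_upwards [hp] with s h1 using h1.const_mul c

lemma neg (hg : HasSecondDerivAt g A x) : HasSecondDerivAt (fun s => -g s) (-A) x := by
  simpa using hg.const_mul (-1)

lemma sub (hg : HasSecondDerivAt g A x) (hk : HasSecondDerivAt k B x) :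
    HasSecondDerivAt (fun s => g s - k s) (A - B) x := by
  simpa [sub_eq_add_neg] using hg.add hk.neg

lemma quadratic (a b c x₀ x : ℝ) :
    HasSecondDerivAt (fun s => a * (s - x₀) ^ 2 + b * (s - x₀) + c) (2 * a) x := by
  refine ⟨fun s => 2 * a * (s - x₀) + b, Eventually.of_forall fun s => ?_, ?_⟩
  · have h : HasDerivAt (fun s => s - x₀) 1 s := (hasDerivAt_id s).sub_const x₀
    refine ((((h.fun_pow 2).const_mul a).fun_add (h.const_mul b)).add_const c).congr_deriv ?_
    norm_num
    ring
  · simpa using (((hasDerivAt_id x).sub_const x₀).const_mul (2 * a)).add_const b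

lemma const (c x : ℝ) : HasSecondDerivAt (fun _ => c) 0 x := by
  simpa using quadratic 0 0 c 0 x

lemma comp_const_sub (c : ℝ) (hg : HasSecondDerivAt g A (c - x)) :
    HasSecondDerivAt (fun s => g (c - s)) A x := by
  obtain ⟨p, hp, hp'⟩ := hg
  refine ⟨fun s => -p (c - s), ?_, by simpa using (hp'.comp_const_sub c x).fun_neg⟩
  have ht : Tendsto (fun s => c - s) (𝓝 x) (𝓝 (c - x)) := by
    apply Continuous.tendsto; fun_prop
  filter_upwards [ht.eventually hp] with s hs using hs.comp_const_sub c s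

lemma comp_const_add (c : ℝ) (hg : HasSecondDerivAt g A (c + x)) :
    HasSecondDerivAt (fun s => g (c + s)) A x := by
  obtain ⟨p, hp, hp'⟩ := hg
  refine ⟨fun s => p (c + s), ?_, hp'.comp_const_add c x⟩
  have ht : Tendsto (fun s => c + s) (𝓝 x) (𝓝 (c + x)) := by
    apply Continuous.tendsto; fun_prop
  filter_upwards [ht.eventually hp] with s hs using hs.comp_const_add c s

lemma comp_sub_const (c : ℝ) (hg : HasSecondDerivAt g A (x - c)) :
    HasSecondDerivAt (fun s => g (s - c)) A x := by
  have h : HasSecondDerivAt g A (-c + x) := by rwa [neg_add_eq_sub]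
  simpa [neg_add_eq_sub] using h.comp_const_add (-c)

lemma differentiableAt (hg : HasSecondDerivAt g A x) : DifferentiableAt ℝ g x := by
  obtain ⟨p, hp, _⟩ := hg
  exact hp.self_of_nhds.differentiableAt

lemma nonneg_of_isLocalMin (hg : HasSecondDerivAt g A x) (hmin : IsLocalMin g x) : 0 ≤ A := by
  obtain ⟨p, hp, hp'⟩ := hg
  by_contra! hA
  have hd : deriv g =ᶠ[𝓝 x] p := by
    filter_upwards [hp] with s hs using hs.deriv
  have hdd : deriv (deriv g) x = A := by rw [hd.deriv_eq]; exact hp'.deriv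
  have hmax := isLocalMax_of_deriv_deriv_neg (hdd.trans_lt hA) hmin.deriv_eq_zero
    hp.self_of_nhds.continuousAt
  have hconst : g =ᶠ[𝓝 x] fun _ => g x := by
    filter_upwards [hmin, hmax] with s h1 h2 using le_antisymm h2 h1
  have h0 : deriv (deriv g) x = 0 := by
    have : deriv g =ᶠ[𝓝 x] fun _ => 0 := by
      filter_upwards [hconst.eventuallyEq_nhds] with s hs
      rw [hs.deriv_eq]; simp
    rw [this.deriv_eq]; simp
  linarith

end HasSecondDerivAt

/-- `W` has second partial derivatives at `(x, y)` with sum `L`. -/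
def HasLaplacianAt (W : ℝ → ℝ → ℝ) (L x y : ℝ) : Prop :=
  ∃ A B : ℝ, HasSecondDerivAt (fun s => W s y) A x ∧ HasSecondDerivAt (W x) B y ∧ A + B = L

namespace HasLaplacianAt

variable {V W : ℝ → ℝ → ℝ} {L M x y : ℝ}

lemma add (hV : HasLaplacianAt V L x y) (hW : HasLaplacianAt W M x y) :
    HasLaplacianAt (fun x y => V x y + W x y) (L + M) x y := by
  obtain ⟨A, B, hA, hB, rfl⟩ := hV
  obtain ⟨A', B', hA', hB', rfl⟩ := hW
  exact ⟨_, _, hA.add hA', hB.add hB', by ring⟩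

lemma const_mul (c : ℝ) (hW : HasLaplacianAt W L x y) :
    HasLaplacianAt (fun x y => c * W x y) (c * L) x y := by
  obtain ⟨A, B, hA, hB, rfl⟩ := hW
  exact ⟨_, _, hA.const_mul c, hB.const_mul c, by ring⟩

lemma neg (hW : HasLaplacianAt W L x y) : HasLaplacianAt (fun x y => -W x y) (-L) x y := by
  simpa using hW.const_mul (-1)

lemma sub (hV : HasLaplacianAt V L x y) (hW : HasLaplacianAt W M x y) :
    HasLaplacianAt (fun x y => V x y - W x y) (L - M) x y := by
  simpa [sub_eq_add_neg] using hV.add hW.neg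

lemma of_fst {g : ℝ → ℝ} (hg : HasSecondDerivAt g L x) (y : ℝ) :
    HasLaplacianAt (fun x _ => g x) L x y :=
  ⟨L, 0, hg, HasSecondDerivAt.const _ _, by ring⟩

lemma of_snd {g : ℝ → ℝ} (hg : HasSecondDerivAt g L y) (x : ℝ) :
    HasLaplacianAt (fun _ y => g y) L x y :=
  ⟨0, L, HasSecondDerivAt.const _ _, hg, by ring⟩

end HasLaplacianAt

/-- A strictly superharmonic function on a closed rectangle is bounded below by any lower bound
of its boundary values. -/
lemma le_of_laplacian_neg {F : ℝ → ℝ → ℝ} {x₁ x₂ y₁ y₂ c : ℝ}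
    (hF : ContinuousOn (fun z : ℝ × ℝ => F z.1 z.2) (Icc x₁ x₂ ×ˢ Icc y₁ y₂))
    (hlap : ∀ x ∈ Ioo x₁ x₂, ∀ y ∈ Ioo y₁ y₂, ∃ L < 0, HasLaplacianAt F L x y)
    (hx : ∀ y ∈ Icc y₁ y₂, c ≤ F x₁ y ∧ c ≤ F x₂ y)
    (hy : ∀ x ∈ Icc x₁ x₂, c ≤ F x y₁ ∧ c ≤ F x y₂) :
    ∀ x ∈ Icc x₁ x₂, ∀ y ∈ Icc y₁ y₂, c ≤ F x y := by
  intro x hx' y hy'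
  obtain ⟨⟨u, v⟩, ⟨hu, hv⟩, hmin⟩ :=
    (isCompact_Icc.prod isCompact_Icc).exists_isMinOn ⟨(x, y), hx', hy'⟩ hF
  simp only at hu hv
  refine le_trans ?_ (hmin (show (x, y) ∈ _ from ⟨hx', hy'⟩))
  simp only
  rcases eq_or_lt_of_le hu.1 with rfl | hu1
  · exact (hx v hv).1
  rcases eq_or_lt_of_le hu.2 with rfl | hu2
  · exact (hx v hv).2
  rcases eq_or_lt_of_le hv.1 with rfl | hv1
  · exact (hy u hu).1
  rcases eq_or_lt_of_le hv.2 with rfl | hv2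
  · exact (hy u hu).2
  obtain ⟨L, hL, A, B, hA, hB, rfl⟩ := hlap u ⟨hu1, hu2⟩ v ⟨hv1, hv2⟩
  have hA0 : 0 ≤ A := by
    refine hA.nonneg_of_isLocalMin ?_
    filter_upwards [Icc_mem_nhds hu1 hu2] with s hs using hmin (show (s, v) ∈ _ from ⟨hs, hv⟩)
  have hB0 : 0 ≤ B := by
    refine hB.nonneg_of_isLocalMin ?_
    filter_upwards [Icc_mem_nhds hv1 hv2] with s hs using hmin (show (u, s) ∈ _ from ⟨hu, hs⟩)
  linarith

/-- One-sided interior gradient estimate on a square, by comparison with a quadratic barrier. -/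
lemma deriv_le_of_laplacian_bound {W : ℝ → ℝ → ℝ} {x₀ y₀ r M N q : ℝ} (hr : 0 < r)
    (hW : ContinuousOn (fun z : ℝ × ℝ => W z.1 z.2)
      (Icc (x₀ - r) (x₀ + r) ×ˢ Icc (y₀ - r) (y₀ + r)))
    (hM : ∀ x ∈ Icc (x₀ - r) (x₀ + r), ∀ y ∈ Icc (y₀ - r) (y₀ + r), |W x y| ≤ M)
    (hlap : ∀ x ∈ Ioo (x₀ - r) (x₀ + r), ∀ y ∈ Ioo (y₀ - r) (y₀ + r),
      ∃ L, |L| < N ∧ HasLaplacianAt W L x y)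
    (hq : HasDerivAt (W x₀) q y₀) : q ≤ 2 * M / r + r * N / 2 := by
  have hM0 : 0 ≤ M := (abs_nonneg _).trans
    (hM x₀ ⟨by linarith, by linarith⟩ y₀ ⟨by linarith, by linarith⟩)
  have hN0 : 0 ≤ N := by
    obtain ⟨L, hL, _⟩ := hlap x₀ ⟨by linarith, by linarith⟩ y₀ ⟨by linarith, by linarith⟩
    exact (abs_nonneg _).trans hL.le
  set m := M / r ^ 2 with hm
  have hmr : m * r ^ 2 = M := by rw [hm]; field_simp
  have hm0 : 0 ≤ m := by positivity
  set F : ℝ → ℝ → ℝ := fun x y =>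
    ((m * (x - x₀) ^ 2 + 0 * (x - x₀) + 0) +
      ((-(m + N / 2)) * (y - 0) ^ 2 + (2 * m * r + N * r / 2) * (y - 0) + 0)) -
      (1 / 2) * (W x (y₀ + y) - W x (y₀ - y)) with hFdef
  have key : ∀ x ∈ Icc (x₀ - r) (x₀ + r), ∀ y ∈ Icc 0 r, 0 ≤ F x y := by
    apply le_of_laplacian_neg
    · have h1 : ContinuousOn (fun z : ℝ × ℝ => W z.1 (y₀ + z.2))
          (Icc (x₀ - r) (x₀ + r) ×ˢ Icc 0 r) :=
        hW.comp (f := fun z : ℝ × ℝ => (z.1, y₀ + z.2)) (by fun_prop) fun z hz =>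
          ⟨hz.1, by linarith [hz.2.1], by linarith [hz.2.2]⟩
      have h2 : ContinuousOn (fun z : ℝ × ℝ => W z.1 (y₀ - z.2))
          (Icc (x₀ - r) (x₀ + r) ×ˢ Icc 0 r) :=
        hW.comp (f := fun z : ℝ × ℝ => (z.1, y₀ - z.2)) (by fun_prop) fun z hz =>
          ⟨hz.1, by linarith [hz.2.2], by linarith [hz.2.1]⟩
      refine ContinuousOn.sub (Continuous.continuousOn (by fun_prop)) ?_
      exact (h1.sub h2).const_smul (1 / 2 : ℝ)
    · intro x hx y hy
      obtain ⟨L, hL, A, B, hA, hB, rfl⟩ := hlap x hx (y₀ + y) ⟨by linarith [hy.1], by linarith [hy.2]⟩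
      obtain ⟨L', hL', A', B', hA', hB', rfl⟩ :=
        hlap x hx (y₀ - y) ⟨by linarith [hy.2], by linarith [hy.1]⟩
      have hplus : HasLaplacianAt (fun x y => W x (y₀ + y)) (A + B) x y :=
        ⟨A, B, hA, hB.comp_const_add y₀, rfl⟩
      have hminus : HasLaplacianAt (fun x y => W x (y₀ - y)) (A' + B') x y :=
        ⟨A', B', hA', hB'.comp_const_sub y₀, rfl⟩
      refine ⟨_, ?_, ((HasLaplacianAt.of_fst (HasSecondDerivAt.quadratic m 0 0 x₀ x) y).add
        (HasLaplacianAt.of_snd (HasSecondDerivAt.quadratic (-(m + N / 2)) (2 * m * r + N * r / 2)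
          0 0 y) x)).sub ((hplus.sub hminus).const_mul (1 / 2))⟩
      rw [abs_lt] at hL hL'
      linarith
    · intro y hy
      have b1 := fun x hx => abs_le.1 (hM x hx (y₀ + y) ⟨by linarith [hy.1], by linarith [hy.2]⟩)
      have b2 := fun x hx => abs_le.1 (hM x hx (y₀ - y) ⟨by linarith [hy.2], by linarith [hy.1]⟩)
      have hl : x₀ - r ∈ Icc (x₀ - r) (x₀ + r) := ⟨by linarith, by linarith⟩
      have hr' : x₀ + r ∈ Icc (x₀ - r) (x₀ + r) := ⟨by linarith, by linarith⟩
      have e1 : 0 ≤ m * (y * (2 * r - y)) :=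
        mul_nonneg hm0 (mul_nonneg hy.1 (by linarith [hy.2]))
      have e2 : 0 ≤ N / 2 * (y * (r - y)) :=
        mul_nonneg (by linarith) (mul_nonneg hy.1 (by linarith [hy.2]))
      constructor
      · simp only [hFdef]; nlinarith [b1 _ hl, b2 _ hl]
      · simp only [hFdef]; nlinarith [b1 _ hr', b2 _ hr']
    · intro x hx
      have b1 := abs_le.1 (hM x hx (y₀ + r) ⟨by linarith, by linarith⟩)
      have b2 := abs_le.1 (hM x hx (y₀ - r) ⟨by linarith, by linarith⟩)
      have e1 : 0 ≤ m * (x - x₀) ^ 2 := by positivity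
      constructor
      · simp only [hFdef]; simp; exact e1
      · simp only [hFdef]; nlinarith
  set c := 2 * m * r + N * r / 2 with hc
  have hcq : 2 * M / r + r * N / 2 = c := by
    rw [hc, ← hmr]; field_simp
  rw [hcq]
  have hd : HasDerivAt (fun y => c * y - (1 / 2) * (W x₀ (y₀ + y) - W x₀ (y₀ - y)))
      (c * 1 - (1 / 2) * (q - -q)) 0 :=
    ((hasDerivAt_id (0 : ℝ)).const_mul c).sub
      ((((show HasDerivAt (W x₀) q (y₀ + 0) by simpa using hq).comp_const_add y₀ 0).sub
        ((show HasDerivAt (W x₀) q (y₀ - 0) by simpa using hq).comp_const_sub y₀ 0)).const_mul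
          (1 / 2))
  have hslope := (hasDerivAt_iff_tendsto_slope.1 hd).mono_left
    (nhdsWithin_mono (0 : ℝ) (show Ioi (0 : ℝ) ⊆ {0}ᶜ from fun s hs => ne_of_gt hs))
  have hnonneg : 0 ≤ c * 1 - (1 / 2) * (q - -q) := by
    refine ge_of_tendsto hslope ?_
    filter_upwards [Ioo_mem_nhdsGT hr] with y hy
    have hk := key x₀ ⟨by linarith, by linarith⟩ y ⟨hy.1.le, hy.2.le⟩
    have e : 0 ≤ (m + N / 2) * y ^ 2 := by positivity
    simp only [hFdef] at hk
    rw [slope_def_field]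
    refine div_nonneg ?_ (by linarith [hy.1])
    simp
    nlinarith
  linarith

/-- Interior gradient estimate on a square. -/
lemma abs_deriv_le_of_laplacian_bound {W : ℝ → ℝ → ℝ} {x₀ y₀ r M N q : ℝ} (hr : 0 < r)
    (hW : ContinuousOn (fun z : ℝ × ℝ => W z.1 z.2)
      (Icc (x₀ - r) (x₀ + r) ×ˢ Icc (y₀ - r) (y₀ + r)))
    (hM : ∀ x ∈ Icc (x₀ - r) (x₀ + r), ∀ y ∈ Icc (y₀ - r) (y₀ + r), |W x y| ≤ M)
    (hlap : ∀ x ∈ Ioo (x₀ - r) (x₀ + r), ∀ y ∈ Ioo (y₀ - r) (y₀ + r),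
      ∃ L, |L| < N ∧ HasLaplacianAt W L x y)
    (hq : HasDerivAt (W x₀) q y₀) : |q| ≤ 2 * M / r + r * N / 2 := by
  refine abs_le.2 ⟨?_, deriv_le_of_laplacian_bound hr hW hM hlap hq⟩
  have := deriv_le_of_laplacian_bound (W := fun x y => -W x y) (q := -q) hr hW.neg
    (by simpa using hM)
    (fun x hx y hy => by
      obtain ⟨L, hL, h⟩ := hlap x hx y hy
      exact ⟨-L, by rwa [abs_neg], h.neg⟩) hq.neg
  linarith

/-- Structural assumptions on the nonlinearity: boundedness, a one-sided modulus of continuity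
(continuous and nonincreasing), and oddness about the midpoint of `[0, Q]`. -/
structure IsOddDecreasing (f : ℝ → ℝ) (Q C : ℝ) : Prop where
  pos : 0 < Q
  bound : ∀ s ∈ Icc 0 Q, |f s| ≤ C
  upper : ∀ η > 0, ∃ ε > 0, ∀ s ∈ Icc 0 Q, ∀ s' ∈ Icc 0 Q, s' - ε ≤ s → f s ≤ f s' + η
  odd : ∀ s ∈ Icc 0 Q, f (Q - s) = -f s

/-- A one-dimensional solution on `[0, d]` connecting `0` to `Q`. -/
structure IsProfile (f : ℝ → ℝ) (Q d : ℝ) (φ : ℝ → ℝ) : Prop where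
  cont : ContinuousOn φ (Icc 0 d)
  zero : φ 0 = 0
  top : φ d = Q
  mem : ∀ y ∈ Ioo 0 d, φ y ∈ Ioo 0 Q
  eqn : ∀ y ∈ Ioo 0 d, HasSecondDerivAt φ (f (φ y)) y

/-- A Lipschitz solution of `Δψ = f(ψ)` in the half-strip `(X, ∞) × (0, d)`, equal to `0` on the
bottom and to `Q` on the top. -/
structure IsHalfStripSol (f : ℝ → ℝ) (Q d X K : ℝ) (ψ : ℝ → ℝ → ℝ) : Prop where
  lip : ∀ x ≥ X, ∀ x' ≥ X, ∀ y ∈ Icc 0 d, ∀ y' ∈ Icc 0 d,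
    |ψ x y - ψ x' y'| ≤ K * (|x - x'| + |y - y'|)
  mem : ∀ x ≥ X, ∀ y ∈ Icc 0 d, ψ x y ∈ Icc 0 Q
  eqn : ∀ x > X, ∀ y ∈ Ioo 0 d, HasLaplacianAt ψ (f (ψ x y)) x y
  bot : ∀ x ≥ X, ψ x 0 = 0
  top : ∀ x ≥ X, ψ x d = Q

/-- `u` is the lower limit of `ψ x` as `x → ∞`, attained uniformly from below on `[0, d]`. -/
structure IsLowerLimit (ψ : ℝ → ℝ → ℝ) (d : ℝ) (u : ℝ → ℝ) : Prop where
  cont : ContinuousOn u (Icc 0 d)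
  lower : ∀ ε > 0, ∀ᶠ x in atTop, ∀ y ∈ Icc 0 d, u y - ε ≤ ψ x y
  freq : ∀ ε > 0, ∀ y ∈ Icc 0 d, ∃ᶠ x in atTop, ψ x y < u y + ε

namespace IsHalfStripSol

variable {f : ℝ → ℝ} {Q d X K C : ℝ} {ψ : ℝ → ℝ → ℝ} {u φ : ℝ → ℝ}

lemma continuousOn (h : IsHalfStripSol f Q d X K ψ) :
    ContinuousOn (fun z : ℝ × ℝ => ψ z.1 z.2) (Ici X ×ˢ Icc 0 d) := by
  intro z hz
  have ht : Tendsto (fun w : ℝ × ℝ => K * (|w.1 - z.1| + |w.2 - z.2|))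
      (𝓝[Ici X ×ˢ Icc 0 d] z) (𝓝 0) := by
    have : Continuous fun w : ℝ × ℝ => K * (|w.1 - z.1| + |w.2 - z.2|) := by fun_prop
    simpa using (this.tendsto z).mono_left nhdsWithin_le_nhds
  refine tendsto_iff_dist_tendsto_zero.2
    (squeeze_zero' (Eventually.of_forall fun _ => dist_nonneg) ?_ ht)
  filter_upwards [self_mem_nhdsWithin] with w hw
  exact h.lip _ hw.1 _ hz.1 _ hw.2 _ hz.2

lemma exists_isLowerLimit (h : IsHalfStripSol f Q d X K ψ) (hK : 0 ≤ K) :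
    ∃ u, IsLowerLimit ψ d u := by
  set u : ℝ → ℝ := fun y => liminf (fun x => ψ x y) atTop with hu
  have hX : ∀ᶠ x in atTop, X ≤ x := eventually_ge_atTop X
  have hlow : ∀ ε > 0, ∀ y ∈ Icc 0 d, ∀ᶠ x in atTop, u y - ε < ψ x y := by
    intro ε hε y hy
    refine eventually_lt_of_lt_liminf (by simp only [hu]; linarith) ?_
    exact ⟨0, by simpa using hX.mono fun x hx => (h.mem x hx y hy).1⟩
  have hfreq : ∀ ε > 0, ∀ y ∈ Icc 0 d, ∃ᶠ x in atTop, ψ x y < u y + ε := by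
    intro ε hε y hy
    refine frequently_lt_of_liminf_lt ?_ (by simp only [hu]; linarith)
    refine IsBoundedUnder.isCoboundedUnder_ge ⟨Q, ?_⟩
    simpa using hX.mono fun x hx => (h.mem x hx y hy).2
  have hlip : ∀ y ∈ Icc 0 d, ∀ y' ∈ Icc 0 d, u y ≤ u y' + K * |y - y'| := by
    intro y hy y' hy'
    refine le_of_forall_pos_le_add fun ε hε => ?_
    obtain ⟨x, hx1, hx2, hx3⟩ := ((hfreq (ε / 2) (by linarith) y' hy').and_eventually
      ((hlow (ε / 2) (by linarith) y hy).and hX)).exists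
    have := (abs_le.1 (h.lip x hx3 x hx3 y hy y' hy')).2
    simp only [sub_self, abs_zero, zero_add] at this
    linarith
  refine ⟨u, ?_, ?_, hfreq⟩
  · intro y hy
    have ht : Tendsto (fun w : ℝ => K * |w - y|) (𝓝[Icc 0 d] y) (𝓝 0) := by
      have : Continuous fun w : ℝ => K * |w - y| := by fun_prop
      simpa using (this.tendsto y).mono_left nhdsWithin_le_nhds
    refine tendsto_iff_dist_tendsto_zero.2
      (squeeze_zero' (Eventually.of_forall fun _ => dist_nonneg) ?_ ht)
    filter_upwards [self_mem_nhdsWithin] with w hw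
    rw [Real.dist_eq, abs_le]
    have h1 := hlip w hw y hy
    have h2 := hlip y hy w hw
    rw [abs_sub_comm] at h2
    constructor <;> linarith
  · intro ε hε
    obtain ⟨t, hts, htf, hcov⟩ := finite_cover_balls_of_compact (isCompact_Icc (a := 0) (b := d))
      (e := ε / (3 * (K + 1))) (by positivity)
    have hall : ∀ᶠ x in atTop, ∀ i ∈ t, u i - ε / 3 < ψ x i :=
      (eventually_all_finite htf).2 fun i hi => hlow _ (by positivity) i (hts hi)
    filter_upwards [hall, hX] with x hx hxX y hy
    obtain ⟨i, hi, hyi⟩ := mem_iUnion₂.1 (hcov hy)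
    rw [Metric.mem_ball, Real.dist_eq, lt_div_iff₀ (by positivity)] at hyi
    have h1 := hlip y hy i (hts hi)
    have h2 := (abs_le.1 (h.lip x hxX x hxX y hy i (hts hi))).1
    simp only [sub_self, abs_zero, zero_add] at h2
    have h3 := hx i hi
    nlinarith [abs_nonneg (y - i)]

lemma lowerLimit_nonneg (h : IsHalfStripSol f Q d X K ψ) (hu : IsLowerLimit ψ d u) :
    ∀ y ∈ Icc 0 d, 0 ≤ u y := by
  intro y hy
  refine le_of_forall_pos_le_add fun ε hε => ?_
  obtain ⟨x, hx1, hx2⟩ := ((hu.freq ε hε y hy).and_eventually (eventually_ge_atTop X)).exists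
  linarith [(h.mem x hx2 y hy).1]

lemma lowerLimit_top (h : IsHalfStripSol f Q d X K ψ) (hd : 0 < d) (hu : IsLowerLimit ψ d u) :
    Q ≤ u d := by
  refine le_of_forall_pos_le_add fun ε hε => ?_
  obtain ⟨x, hx1, hx2⟩ :=
    ((hu.freq ε hε d ⟨hd.le, le_rfl⟩).and_eventually (eventually_ge_atTop X)).exists
  linarith [h.top x hx2]

/-- Second-order test for the lower limit: if `u - G` is smaller at an interior point of `[p, q]`
than at the endpoints, then `G''` is nearly bounded by `f(ψ)` at some point of `(p, q)` where `ψ`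
nearly dominates `u`. -/
lemma exists_secondDeriv_le (h : IsHalfStripSol f Q d X K ψ) (hu : IsLowerLimit ψ d u)
    {p q y₀ : ℝ} {G G'' : ℝ → ℝ} (hp : 0 ≤ p) (hq : q ≤ d) (hy₀ : y₀ ∈ Ioo p q)
    (hG : ContinuousOn G (Icc p q)) (hG'' : ∀ y ∈ Ioo p q, HasSecondDerivAt G (G'' y) y)
    (hpm : u y₀ - G y₀ < u p - G p) (hqm : u y₀ - G y₀ < u q - G q) {ε : ℝ} (hε : 0 < ε) :
    ∃ x ≥ X, ∃ z ∈ Ioo p q, u z - ε ≤ ψ x z ∧ G'' z ≤ f (ψ x z) + ε := by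
  have hpq : Icc p q ⊆ Icc 0 d := Icc_subset_Icc hp hq
  have hy₀' : y₀ ∈ Icc p q := Ioo_subset_Icc_self hy₀
  set m := u y₀ - G y₀ with hm
  set γ := min (u p - G p) (u q - G q) - m with hγ
  have hγ0 : 0 < γ := sub_pos.2 (lt_min hpm hqm)
  have hγp : m + γ ≤ u p - G p := by rw [hγ]; linarith [min_le_left (u p - G p) (u q - G q)]
  have hγq : m + γ ≤ u q - G q := by rw [hγ]; linarith [min_le_right (u p - G p) (u q - G q)]
  set ε' := min ε (γ / 3) with hε'
  have hε'0 : 0 < ε' := lt_min hε (by linarith)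
  have hε'ε : ε' ≤ ε := min_le_left _ _
  have hε'γ : ε' ≤ γ / 3 := min_le_right _ _
  obtain ⟨y₁, hy₁, hmin⟩ := isCompact_Icc.exists_isMinOn ⟨y₀, hy₀'⟩ ((hu.cont.mono hpq).sub hG)
  set m' := u y₁ - G y₁ with hm'
  have hm'le : ∀ y ∈ Icc p q, m' ≤ u y - G y := fun y hy => hmin hy
  obtain ⟨M, hM⟩ := eventually_atTop.1 ((hu.lower ε' hε'0).and (eventually_ge_atTop (X + 1)))
  set R := 1 + (m - m' + 2 * ε') / (ε / 2) with hR
  have hmm' : m' ≤ m := hm'le y₀ hy₀'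
  have hR1 : 1 ≤ R := by
    have : 0 ≤ (m - m' + 2 * ε') / (ε / 2) := by
      apply div_nonneg <;> linarith
    linarith
  have hRbig : m - m' + 2 * ε' ≤ ε / 2 * R ^ 2 := by
    have : ε / 2 * R = ε / 2 + (m - m' + 2 * ε') := by rw [hR]; field_simp
    nlinarith
  obtain ⟨x₀, hx₀, hx₀M⟩ :=
    ((hu.freq ε' hε'0 y₀ (hpq hy₀')).and_eventually (eventually_ge_atTop (M + R))).exists
  by_contra! hcon
  have key : ∀ x ∈ Icc (x₀ - R) (x₀ + R), ∀ y ∈ Icc p q, m + ε' ≤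
      (ψ x y - G y) + (ε / 2 * (x - x₀) ^ 2 + 0 * (x - x₀) + 0) := by
    have hMx : ∀ x ∈ Icc (x₀ - R) (x₀ + R), M ≤ x := fun x hx => by linarith [hx.1]
    apply le_of_laplacian_neg
    · refine ContinuousOn.add (ContinuousOn.sub ?_ ?_) (Continuous.continuousOn (by fun_prop))
      · refine h.continuousOn.mono fun z hz => ⟨?_, hpq hz.2⟩
        have := (hM z.1 (hMx _ hz.1)).2
        simp only [mem_Ici]; linarith
      · exact hG.comp continuousOn_snd fun z hz => hz.2
    · intro x hx y hy
      have hxM := hM x (hMx x (Ioo_subset_Icc_self hx))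
      refine ⟨_, ?_, ((h.eqn x (by linarith [hxM.2]) y ⟨by linarith [hy.1], by linarith [hy.2]⟩).sub
        (HasLaplacianAt.of_snd (hG'' y hy) x)).add
          (HasLaplacianAt.of_fst (HasSecondDerivAt.quadratic (ε / 2) 0 0 x₀ x) y)⟩
      have h1 := hxM.1 y (hpq (Ioo_subset_Icc_self hy))
      have := hcon x (by linarith [hxM.2]) y hy (by linarith)
      linarith
    · intro y hy
      have h1 := (hM (x₀ - R) (by linarith)).1 y (hpq hy)
      have h2 := (hM (x₀ + R) (by linarith)).1 y (hpq hy)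
      have h3 := hm'le y hy
      constructor <;> nlinarith
    · intro x hx
      have h1 := (hM x (hMx x hx)).1 p (hpq ⟨le_rfl, by linarith [hy₀.1, hy₀.2]⟩)
      have h2 := (hM x (hMx x hx)).1 q (hpq ⟨by linarith [hy₀.1, hy₀.2], le_rfl⟩)
      have h3 : 0 ≤ ε / 2 * (x - x₀) ^ 2 := by positivity
      constructor <;> linarith
  have := key x₀ ⟨by linarith, by linarith⟩ y₀ hy₀'
  simp only [sub_self] at this
  linarith

/-- If a translated profile lies below the lower limit, their difference lies above the chord
vanishing at the left endpoint. -/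
lemma chord_le (h : IsHalfStripSol f Q d X K ψ) (hf : IsOddDecreasing f Q C)
    (hu : IsLowerLimit ψ d u) (hφ : IsProfile f Q d φ) {t c : ℝ} (ht : 0 < t)
    (hle : ∀ y ∈ Icc t d, φ (y - t) ≤ u y) (hc : c * (d - t) ≤ u d - φ (d - t)) :
    ∀ y ∈ Ioo t d, c * (y - t) ≤ u y - φ (y - t) := by
  intro y₀ hy₀
  by_contra! hlt
  have htd : t < d := hy₀.1.trans hy₀.2
  set e := c * (y₀ - t) - (u y₀ - φ (y₀ - t)) with he
  have he0 : 0 < e := by linarith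
  have hP : 0 < (y₀ - t) * (d - y₀) := mul_pos (by linarith [hy₀.1]) (by linarith [hy₀.2])
  set η := e / (2 * ((y₀ - t) * (d - y₀))) with hη
  have hη0 : 0 < η := by positivity
  have hηe : η * ((y₀ - t) * (d - y₀)) = e / 2 := by
    rw [hη]; field_simp; exact div_self hP.ne'
  obtain ⟨ε, hε, hmod⟩ := hf.upper η hη0
  have hmaps : ∀ y ∈ Icc t d, y - t ∈ Icc 0 d := fun y hy =>
    ⟨by linarith [hy.1], by linarith [hy.2]⟩
  obtain ⟨x, hx, z, hz, hz1, hz2⟩ := h.exists_secondDeriv_le hu (p := t) (q := d) (y₀ := y₀)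
    (G := fun y => φ (y - t) + (η * (y - t) ^ 2 + (c - η * (d - t)) * (y - t) + 0))
    (G'' := fun y => f (φ (y - t)) + 2 * η) ht.le le_rfl hy₀
    (by
      refine ContinuousOn.add ?_ (Continuous.continuousOn (by fun_prop))
      exact hφ.cont.comp (by fun_prop) hmaps)
    (fun y hy => by
      refine HasSecondDerivAt.add ?_ (HasSecondDerivAt.quadratic _ _ _ _ _)
      exact (hφ.eqn _ ⟨by linarith [hy.1], by linarith [hy.2]⟩).comp_sub_const t)
    (by
      have := hle t ⟨le_rfl, htd.le⟩
      simp only [sub_self] at this ⊢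
      nlinarith)
    (by nlinarith)
    (lt_min hε (half_pos hη0))
  have hzt : z - t ∈ Ioo 0 d := ⟨by linarith [hz.1], by linarith [hz.2]⟩
  have hz3 := hmod (ψ x z) (h.mem x hx z ⟨by linarith [hz.1], hz.2.le⟩) (φ (z - t))
    (Ioo_subset_Icc_self (hφ.mem _ hzt))
    (by linarith [hle z ⟨hz.1.le, hz.2.le⟩, min_le_left ε (η / 2)])
  linarith [min_le_right ε (η / 2)]

/-- The lower limit has no upward corner at an interior zero. -/
lemma lowerLimit_ne_zero_of_chord (h : IsHalfStripSol f Q d X K ψ) (hf : IsOddDecreasing f Q C)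
    (hu : IsLowerLimit ψ d u) {t c : ℝ} (ht : t ∈ Ioo 0 d) (hc : 0 < c)
    (hchord : ∀ y ∈ Ioo t d, c * (y - t) ≤ u y) : u t ≠ 0 := by
  intro hut
  have hC : 0 ≤ C := (abs_nonneg _).trans (hf.bound 0 ⟨le_rfl, hf.pos.le⟩)
  set B := C + 1 with hB
  obtain ⟨ρ, hρ0, hρt, hρd, hρB⟩ : ∃ ρ > 0, ρ ≤ t ∧ ρ < d - t ∧ B * ρ < c / 2 := by
    refine ⟨min t (min ((d - t) / 2) (c / (4 * B))), ?_, min_le_left _ _, ?_, ?_⟩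
    · have := ht.1
      have := ht.2
      refine lt_min ht.1 (lt_min (by linarith) (by positivity))
    · have := (min_le_right t (min ((d - t) / 2) (c / (4 * B)))).trans (min_le_left _ _)
      linarith [ht.2]
    · have := (min_le_right t (min ((d - t) / 2) (c / (4 * B)))).trans (min_le_right _ _)
      have hB0 : 0 < 4 * B := by linarith
      rw [le_div_iff₀ hB0] at this
      linarith
  obtain ⟨x, hx, z, hz, -, hz2⟩ := h.exists_secondDeriv_le hu (p := t - ρ) (q := t + ρ) (y₀ := t)
    (G := fun y => B * (y - t) ^ 2 + c / 2 * (y - t) + 0) (G'' := fun _ => 2 * B)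
    (by linarith) (by linarith) ⟨by linarith, by linarith⟩
    (Continuous.continuousOn (by fun_prop)) (fun y _ => HasSecondDerivAt.quadratic _ _ _ _ _)
    (by
      have := h.lowerLimit_nonneg hu (t - ρ) ⟨by linarith, by linarith [ht.2]⟩
      rw [hut]
      simp only [sub_self]
      nlinarith)
    (by
      have := hchord (t + ρ) ⟨by linarith, by linarith⟩
      rw [hut]
      simp only [sub_self]
      nlinarith) one_pos
  have := (abs_le.1 (hf.bound _ (h.mem x hx z ⟨by linarith [hz.1], by linarith [hz.2]⟩))).2
  linarith

lemma profile_lt_lowerLimit (h : IsHalfStripSol f Q d X K ψ) (hf : IsOddDecreasing f Q C)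
    (hu : IsLowerLimit ψ d u) (hφ : IsProfile f Q d φ) {t : ℝ} (ht : t ∈ Ioc 0 d)
    (hle : ∀ y ∈ Icc t d, φ (y - t) ≤ u y) : ∀ y ∈ Icc t d, φ (y - t) < u y := by
  have hd : 0 < d := ht.1.trans_le ht.2
  have hQd := h.lowerLimit_top hd hu
  have htop : φ (d - t) < u d := by
    rcases eq_or_lt_of_le ht.2 with rfl | htd
    · simpa [hφ.zero] using hf.pos.trans_le hQd
    · exact (hφ.mem _ ⟨by linarith, by linarith [ht.1]⟩).2.trans_le hQd
  rcases eq_or_lt_of_le ht.2 with rfl | htd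
  · intro y hy
    obtain rfl : y = t := le_antisymm hy.2 hy.1
    exact htop
  set c := (u d - φ (d - t)) / (d - t) with hc
  have hdt : 0 < d - t := by linarith
  have hc0 : 0 < c := div_pos (by linarith) hdt
  have hchord := h.chord_le hf hu hφ (t := t) (c := c) ht.1 hle (by rw [hc]; field_simp; rfl)
  intro y hy
  rcases eq_or_lt_of_le hy.1 with rfl | hty
  · rw [sub_self, hφ.zero]
    refine lt_of_le_of_ne (h.lowerLimit_nonneg hu _ ⟨ht.1.le, ht.2⟩) (Ne.symm ?_)
    refine h.lowerLimit_ne_zero_of_chord hf hu ⟨ht.1, htd⟩ hc0 fun y hy => ?_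
    have h1 := hchord y hy
    have h2 := (hφ.mem (y - t) ⟨by linarith [hy.1], by linarith [hy.2, ht.1]⟩).1
    linarith
  rcases eq_or_lt_of_le hy.2 with rfl | hyd
  · exact htop
  · have h1 := hchord y ⟨hty, hyd⟩
    have h2 : 0 < c * (y - t) := mul_pos hc0 (by linarith)
    linarith

/-- Sliding: the profile lies below the lower limit. -/
lemma profile_le_lowerLimit (h : IsHalfStripSol f Q d X K ψ) (hd : 0 < d)
    (hf : IsOddDecreasing f Q C) (hu : IsLowerLimit ψ d u) (hφ : IsProfile f Q d φ) :
    ∀ y ∈ Icc 0 d, φ y ≤ u y := by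
  set Φ : ℝ → ℝ := IccExtend hd.le ((Icc 0 d).domRestrict φ) with hΦ
  set U : ℝ → ℝ := IccExtend hd.le ((Icc 0 d).domRestrict u) with hU
  have hΦc : Continuous Φ := (continuousOn_iff_continuous_domRestrict.1 hφ.cont).Icc_extend'
  have hUc : Continuous U := (continuousOn_iff_continuous_domRestrict.1 hu.cont).Icc_extend'
  have hΦeq : ∀ y ∈ Icc 0 d, Φ y = φ y := fun y hy => IccExtend_of_mem _ _ hy
  have hUeq : ∀ y ∈ Icc 0 d, U y = u y := fun y hy => IccExtend_of_mem _ _ hy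
  have hΦ0 : ∀ y ≤ 0, Φ y = 0 := fun y hy => by
    rw [hΦ, IccExtend_of_le_left _ _ hy]; exact hφ.zero
  have hU0 : ∀ y ∈ Icc 0 d, 0 ≤ U y := fun y hy => by
    rw [hUeq y hy]; exact h.lowerLimit_nonneg hu y hy
  set T : Set ℝ := Icc 0 d ∩ {t | ∀ y ∈ Icc 0 d, Φ (y - t) ≤ U y} with hT
  have hTc : IsCompact T := by
    refine isCompact_Icc.inter_right ?_
    simp only [ofPred_forall]
    exact isClosed_biInter fun y _ => isClosed_le (by fun_prop) continuous_const
  have hTd : d ∈ T := ⟨⟨hd.le, le_rfl⟩, fun y hy => by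
    rw [hΦ0 _ (by linarith [hy.2])]; exact hU0 y hy⟩
  obtain ⟨t, htT, htmin⟩ := hTc.exists_isLeast ⟨d, hTd⟩
  have ht0 : t = 0 := by
    by_contra hne
    have htpos : 0 < t := lt_of_le_of_ne htT.1.1 (Ne.symm hne)
    have hstrict := h.profile_lt_lowerLimit hf hu hφ (t := t) ⟨htpos, htT.1.2⟩ fun y hy => by
      have hy' : y ∈ Icc 0 d := ⟨by linarith [hy.1], hy.2⟩
      rw [← hΦeq _ ⟨by linarith [hy.1], by linarith [hy.2]⟩, ← hUeq y hy']
      exact htT.2 y hy'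
    have hev : ∀ᶠ s in 𝓝 t, ∀ y ∈ Icc 0 d, Φ (y - s) ≤ U y := by
      refine isCompact_Icc.eventually_forall_of_forall_eventually
        (P := fun s y => y ∈ Icc 0 d → Φ (y - s) ≤ U y) (fun y hy => ?_) |>.mono
          fun s hs y hy => hs y hy hy
      rcases lt_or_ge y t with hyt | hyt
      · have : ∀ᶠ z : ℝ × ℝ in 𝓝 (t, y), z.2 < z.1 :=
          (isOpen_lt continuous_snd continuous_fst).mem_nhds hyt
        filter_upwards [this] with z hz hz2
        rw [hΦ0 _ (by linarith)]
        exact hU0 _ hz2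
      · have hlt : Φ (y - t) < U y := by
          rw [hΦeq _ ⟨by linarith, by linarith [hy.2]⟩, hUeq y hy]
          exact hstrict y ⟨hyt, hy.2⟩
        have : ∀ᶠ z : ℝ × ℝ in 𝓝 (t, y), Φ (z.2 - z.1) < U z.2 :=
          (isOpen_lt (by fun_prop) (by fun_prop)).mem_nhds hlt
        filter_upwards [this] with z hz _ using hz.le
    obtain ⟨s, hs, hs0, hst⟩ := ((hev.filter_mono nhdsWithin_le_nhds).and
      (Ioo_mem_nhdsLT htpos)).exists
    exact absurd (htmin ⟨⟨hs0.le, hst.le.trans htT.1.2⟩, hs⟩) (not_le.2 hst)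
  intro y hy
  have := htT.2 y hy
  rwa [ht0, sub_zero, hΦeq y hy, hUeq y hy] at this

lemma eventually_profile_sub_le (h : IsHalfStripSol f Q d X K ψ) (hd : 0 < d) (hK : 0 ≤ K)
    (hf : IsOddDecreasing f Q C) (hφ : IsProfile f Q d φ) {ε : ℝ} (hε : 0 < ε) :
    ∀ᶠ x in atTop, ∀ y ∈ Icc 0 d, φ y - ε ≤ ψ x y := by
  obtain ⟨u, hu⟩ := h.exists_isLowerLimit hK
  filter_upwards [hu.lower ε hε] with x hx y hy
  linarith [hx y hy, h.profile_le_lowerLimit hd hf hu hφ y hy]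

end IsHalfStripSol

lemma IsProfile.reflect {f : ℝ → ℝ} {Q d C : ℝ} {φ : ℝ → ℝ} (hf : IsOddDecreasing f Q C)
    (h : IsProfile f Q d φ) : IsProfile f Q d fun y => Q - φ (d - y) where
  cont := continuousOn_const.sub (h.cont.comp (by fun_prop) fun y hy =>
    ⟨by linarith [hy.2], by linarith [hy.1]⟩)
  zero := by simp [h.top]
  top := by simp [h.zero]
  mem y hy := by
    have := h.mem (d - y) ⟨by linarith [hy.2], by linarith [hy.1]⟩
    exact ⟨by linarith [this.2], by linarith [this.1]⟩
  eqn y hy := by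
    have hy' : d - y ∈ Ioo 0 d := ⟨by linarith [hy.2], by linarith [hy.1]⟩
    rw [hf.odd _ (Ioo_subset_Icc_self (h.mem _ hy'))]
    simpa using (HasSecondDerivAt.const Q y).sub ((h.eqn _ hy').comp_const_sub d)

namespace IsHalfStripSol

variable {f : ℝ → ℝ} {Q d X K C : ℝ} {ψ : ℝ → ℝ → ℝ} {φ : ℝ → ℝ}

lemma reflect (hf : IsOddDecreasing f Q C) (h : IsHalfStripSol f Q d X K ψ) :
    IsHalfStripSol f Q d X K fun x y => Q - ψ x (d - y) where
  lip x hx x' hx' y hy y' hy' := by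
    have := h.lip x hx x' hx' (d - y) ⟨by linarith [hy.2], by linarith [hy.1]⟩ (d - y')
      ⟨by linarith [hy'.2], by linarith [hy'.1]⟩
    rw [sub_sub_sub_cancel_left] at this ⊢
    rwa [abs_sub_comm (ψ x' _), abs_sub_comm y]
  mem x hx y hy := by
    have := h.mem x hx (d - y) ⟨by linarith [hy.2], by linarith [hy.1]⟩
    exact ⟨by linarith [this.2], by linarith [this.1]⟩
  eqn x hx y hy := by
    have hy' : d - y ∈ Ioo 0 d := ⟨by linarith [hy.2], by linarith [hy.1]⟩
    rw [hf.odd _ (h.mem x hx.le _ (Ioo_subset_Icc_self hy'))]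
    obtain ⟨A, B, hA, hB, hAB⟩ := h.eqn x hx _ hy'
    have h1 : HasLaplacianAt (fun x y => ψ x (d - y)) (f (ψ x (d - y))) x y :=
      ⟨A, B, hA, hB.comp_const_sub d, hAB⟩
    simpa using (HasLaplacianAt.of_fst (HasSecondDerivAt.const Q x) y).sub h1
  bot x hx := by simp [h.top x hx]
  top x hx := by simp [h.bot x hx]

lemma eventually_abs_sub_le (h : IsHalfStripSol f Q d X K ψ) (hd : 0 < d) (hK : 0 ≤ K)
    (hf : IsOddDecreasing f Q C) (hφ : IsProfile f Q d φ) {ε : ℝ} (hε : 0 < ε) :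
    ∀ᶠ x in atTop, ∀ y ∈ Icc 0 d, |ψ x y - φ y| ≤ ε := by
  filter_upwards [h.eventually_profile_sub_le hd hK hf hφ hε,
    (h.reflect hf).eventually_profile_sub_le hd hK hf (hφ.reflect hf) hε] with x h1 h2 y hy
  have h3 := h2 (d - y) ⟨by linarith [hy.2], by linarith [hy.1]⟩
  simp only [sub_sub_cancel] at h3
  exact abs_le.2 ⟨by linarith [h1 y hy], by linarith⟩

/-- Convergence to the profile in `C¹`, uniformly on compact subsets of `(0, d)`. -/
lemma eventually_C1_close (h : IsHalfStripSol f Q d X K ψ) (hd : 0 < d) (hK : 0 ≤ K)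
    (hf : IsOddDecreasing f Q C) (hφ : IsProfile f Q d φ) {S : Set ℝ} (hS : S ⊆ Ioo 0 d)
    (hSc : IsCompact S) {ε : ℝ} (hε : 0 < ε) :
    ∀ᶠ x in atTop, ∀ y ∈ S, ∀ q q', HasDerivAt (ψ x) q y → HasDerivAt φ q' y →
      |ψ x y - φ y| + |q - q'| < ε := by
  obtain rfl | hne := S.eq_empty_or_nonempty
  · simp
  obtain ⟨l, hl, hlmin⟩ := hSc.exists_isLeast hne
  obtain ⟨g, hg, hgmax⟩ := hSc.exists_isGreatest hne
  have hC : 0 ≤ C := (abs_nonneg _).trans (hf.bound 0 ⟨le_rfl, hf.pos.le⟩)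
  set N := 2 * C + 1 with hN
  obtain ⟨r, hr0, hrl, hrg, hrN⟩ : ∃ r > 0, r ≤ l ∧ r ≤ d - g ∧ r * N < ε := by
    have := (hS hl).1
    have := (hS hg).2
    refine ⟨min l (min (d - g) (ε / (2 * N))), lt_min (hS hl).1 (lt_min (by linarith)
      (by positivity)), min_le_left _ _, (min_le_right _ _).trans (min_le_left _ _), ?_⟩
    have h1 := (min_le_right l _).trans (min_le_right (d - g) (ε / (2 * N)))
    rw [le_div_iff₀ (by positivity)] at h1
    linarith
  set μ := min (ε / 8) (ε * r / 16) with hμ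
  have hμ0 : 0 < μ := lt_min (by positivity) (by positivity)
  obtain ⟨M, hM⟩ := eventually_atTop.1
    ((h.eventually_abs_sub_le hd hK hf hφ hμ0).and (eventually_gt_atTop X))
  filter_upwards [eventually_ge_atTop (M + r)] with x₀ hx₀ y₀ hy₀ q q' hq hq'
  have hl0 : l ≤ y₀ := hlmin hy₀
  have hg0 : y₀ ≤ g := hgmax hy₀
  have hsub : Icc (y₀ - r) (y₀ + r) ⊆ Icc 0 d := Icc_subset_Icc (by linarith) (by linarith)
  have hgrad := abs_deriv_le_of_laplacian_bound (W := fun x y => ψ x y - φ y) (x₀ := x₀)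
    (y₀ := y₀) (r := r) (M := μ) (N := N) (q := q - q') hr0
    (by
      refine ContinuousOn.sub (h.continuousOn.mono fun z hz => ⟨?_, hsub hz.2⟩)
        (hφ.cont.comp continuousOn_snd fun z hz => hsub hz.2)
      exact (hM z.1 (by linarith [hz.1.1])).2.le)
    (fun x hx y hy => (hM x (by linarith [hx.1])).1 y (hsub hy))
    (fun x hx y hy => by
      have hxX := (hM x (by linarith [hx.1])).2
      have hy' : y ∈ Ioo 0 d := ⟨by linarith [hy.1], by linarith [hy.2]⟩
      refine ⟨_, ?_, (h.eqn x hxX y hy').sub (HasLaplacianAt.of_snd (hφ.eqn y hy') x)⟩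
      have h1 := abs_le.1 (hf.bound _ (h.mem x hxX.le y (Ioo_subset_Icc_self hy')))
      have h2 := abs_le.1 (hf.bound _ (Ioo_subset_Icc_self (hφ.mem y hy')))
      rw [abs_lt]
      constructor <;> linarith)
    (hq.sub hq')
  have h0 := (hM x₀ (by linarith)).1 y₀ (hsub ⟨by linarith, by linarith⟩)
  have h1 : μ ≤ ε / 8 := min_le_left _ _
  have h2 : 2 * μ / r ≤ ε / 8 := by
    rw [div_le_iff₀ hr0]
    linarith [min_le_right (ε / 8) (ε * r / 16)]
  linarith

end IsHalfStripSol

lemma sq_le_cubic_sub {t t' : ℝ} (ht : 0 ≤ t) (htt' : t ≤ t') (ht' : t' ≤ 1) :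
    (t' - t) ^ 2 ≤ (3 * t' ^ 2 - 2 * t' ^ 3) - (3 * t ^ 2 - 2 * t ^ 3) := by
  have h1 : 0 ≤ (t' - t) * (t * (1 - t')) :=
    mul_nonneg (by linarith) (mul_nonneg ht (by linarith))
  have h2 : 0 ≤ (t' - t) ^ 2 * (1 - (t' - t)) := mul_nonneg (sq_nonneg _) (by linarith)
  nlinarith

lemma exists_cubic_eq {Q s : ℝ} (hs : s ∈ Icc 0 Q) :
    ∃ t ∈ Icc (0 : ℝ) 1, Q * (3 * t ^ 2 - 2 * t ^ 3) = s := by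
  have hc : ContinuousOn (fun t : ℝ => Q * (3 * t ^ 2 - 2 * t ^ 3)) (Icc 0 1) :=
    Continuous.continuousOn (by fun_prop)
  refine intermediate_value_Icc zero_le_one hc ?_
  norm_num
  exact hs

lemma isOddDecreasing_of_cubic {Q : ℝ} (hQ : 0 < Q) {κ f : ℝ → ℝ}
    (hκ : ∀ t ∈ Icc (0 : ℝ) 1, κ (Q * (3 * t ^ 2 - 2 * t ^ 3)) = t)
    (hf : ∀ s : ℝ, f s = 6 * Q * (1 - 2 * κ s)) : IsOddDecreasing f Q (6 * Q) where
  pos := hQ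
  bound s hs := by
    obtain ⟨t, ht, rfl⟩ := exists_cubic_eq hs
    rw [hf, hκ t ht, abs_le]
    constructor <;> nlinarith [ht.1, ht.2]
  upper η hη := by
    refine ⟨Q * (η / (12 * Q)) ^ 2, by positivity, fun s hs s' hs' hss' => ?_⟩
    obtain ⟨t, ht, rfl⟩ := exists_cubic_eq hs
    obtain ⟨t', ht', rfl⟩ := exists_cubic_eq hs'
    rw [hf, hf, hκ t ht, hκ t' ht']
    by_contra! hlt
    have h1 : η / (12 * Q) < t' - t := by
      rw [div_lt_iff₀ (by positivity)]
      linarith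
    have h0 : 0 < η / (12 * Q) := by positivity
    have h2 : (η / (12 * Q)) ^ 2 < (t' - t) ^ 2 := by gcongr
    have h3 := sq_le_cubic_sub ht.1 (by linarith) ht'.2
    nlinarith [mul_lt_mul_of_pos_left (h2.trans_le h3) hQ]
  odd s hs := by
    obtain ⟨t, ht, rfl⟩ := exists_cubic_eq hs
    have e : Q - Q * (3 * t ^ 2 - 2 * t ^ 3) = Q * (3 * (1 - t) ^ 2 - 2 * (1 - t) ^ 3) := by ring
    rw [e, hf, hf, hκ t ht, hκ (1 - t) ⟨by linarith [ht.2], by linarith [ht.1]⟩]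
    ring

lemma isProfile_cubic {Q : ℝ} (hQ : 0 < Q) {κ f : ℝ → ℝ}
    (hκ : ∀ t ∈ Icc (0 : ℝ) 1, κ (Q * (3 * t ^ 2 - 2 * t ^ 3)) = t)
    (hf : ∀ s : ℝ, f s = 6 * Q * (1 - 2 * κ s)) :
    IsProfile f Q 1 fun t => Q * (3 * t ^ 2 - 2 * t ^ 3) where
  cont := Continuous.continuousOn (by fun_prop)
  zero := by norm_num
  top := by norm_num
  mem y hy := by
    have h1 : 0 < y ^ 2 * (3 - 2 * y) := mul_pos (pow_pos hy.1 2) (by linarith [hy.2])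
    have h2 : 0 < (1 - y) ^ 2 * (1 + 2 * y) :=
      mul_pos (pow_pos (by linarith [hy.2]) 2) (by linarith [hy.1])
    constructor <;> nlinarith
  eqn y hy := by
    rw [hf, hκ y (Ioo_subset_Icc_self hy)]
    refine ⟨fun s => Q * (6 * s - 6 * s ^ 2), Eventually.of_forall fun s => ?_, ?_⟩
    · refine ((((hasDerivAt_pow 2 s).const_mul 3).fun_sub
        ((hasDerivAt_pow 3 s).const_mul 2)).const_mul Q).congr_deriv ?_
      push_cast
      ring
    · refine ((((hasDerivAt_id y).const_mul 6).fun_sub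
        ((hasDerivAt_pow 2 y).const_mul 6)).const_mul Q).congr_deriv ?_
      norm_num
      ring

lemma ContDiffAt.hasSecondDerivAt {g : ℝ → ℝ} {x : ℝ} (hg : ContDiffAt ℝ 2 g x) :
    HasSecondDerivAt g (deriv (deriv g) x) x := by
  refine ⟨deriv g, ?_, ?_⟩
  · filter_upwards [hg.eventually (by simp)] with s hs
    exact (hs.differentiableAt (by simp)).hasDerivAt
  · have h1 : ContDiffAt ℝ 1 (fderiv ℝ g) x := hg.fderiv_right (by norm_num)
    have h2 : DifferentiableAt ℝ (fun s => fderiv ℝ g s 1) x :=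
      (h1.differentiableAt (by simp)).clm_apply (differentiableAt_const _)
    exact h2.hasDerivAt

lemma IsBVPSol.isProfile {Q d : ℝ} {f φ : ℝ → ℝ} (h : IsBVPSol Q f d φ) :
    IsProfile f Q d φ := by
  obtain ⟨h1, h2, h3, h4, h5, h6⟩ := h
  refine ⟨h1.continuousOn, h4, h5, h6, fun y hy => ?_⟩
  rw [← h3 y hy]
  exact (h2.contDiffAt (Ioo_mem_nhds hy.1 hy.2)).hasSecondDerivAt

lemma DifferentiableAt.hasDerivAt_pd2 {ψ : ℝ × ℝ → ℝ} {x y : ℝ}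
    (h : DifferentiableAt ℝ ψ (x, y)) : HasDerivAt (fun s => ψ (x, s)) (pd2 ψ (x, y)) y :=
  h.hasFDerivAt.comp_hasDerivAt y ((hasDerivAt_const y x).prodMk (hasDerivAt_id y))

lemma DifferentiableAt.hasDerivAt_pd1 {ψ : ℝ × ℝ → ℝ} {x y : ℝ}
    (h : DifferentiableAt ℝ ψ (x, y)) : HasDerivAt (fun s => ψ (s, y)) (pd1 ψ (x, y)) x :=
  h.hasFDerivAt.comp_hasDerivAt x ((hasDerivAt_id x).prodMk (hasDerivAt_const x y))

lemma ContDiffAt.hasLaplacianAt {ψ : ℝ × ℝ → ℝ} {x y : ℝ} (h : ContDiffAt ℝ 2 ψ (x, y)) :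
    HasLaplacianAt (fun x y => ψ (x, y)) (lap ψ (x, y)) x y := by
  have hd : DifferentiableAt ℝ (fderiv ℝ ψ) (x, y) :=
    (h.fderiv_right (m := 1) (by norm_num)).differentiableAt (by simp)
  have hev : ∀ᶠ z in 𝓝 (x, y), DifferentiableAt ℝ ψ z :=
    (h.eventually (by simp)).mono fun z hz => hz.differentiableAt (by simp)
  have hx : Tendsto (fun s : ℝ => (s, y)) (𝓝 x) (𝓝 (x, y)) := by
    apply Continuous.tendsto; fun_prop
  have hy : Tendsto (fun s : ℝ => (x, s)) (𝓝 y) (𝓝 (x, y)) := by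
    apply Continuous.tendsto; fun_prop
  refine ⟨pd1 (pd1 ψ) (x, y), pd2 (pd2 ψ) (x, y), ⟨fun s => pd1 ψ (s, y), ?_, ?_⟩,
    ⟨fun s => pd2 ψ (x, s), ?_, ?_⟩, rfl⟩
  · filter_upwards [hx.eventually hev] with s hs using hs.hasDerivAt_pd1
  · exact DifferentiableAt.hasDerivAt_pd1 (hd.clm_apply (differentiableAt_const _))
  · filter_upwards [hy.eventually hev] with s hs using hs.hasDerivAt_pd2
  · exact DifferentiableAt.hasDerivAt_pd2 (hd.clm_apply (differentiableAt_const _))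

lemma LipschitzOnWith.abs_sub_le {ψ : ℝ × ℝ → ℝ} {S : Set (ℝ × ℝ)} {K : NNReal}
    (h : LipschitzOnWith K ψ S) {x x' y y' : ℝ} (hz : (x, y) ∈ S) (hz' : (x', y') ∈ S) :
    |ψ (x, y) - ψ (x', y')| ≤ K * (|x - x'| + |y - y'|) := by
  refine (h.dist_le_mul _ hz _ hz').trans (mul_le_mul_of_nonneg_left ?_ K.2)
  rw [Prod.dist_eq, Real.dist_eq, Real.dist_eq]
  exact max_le (by linarith [abs_nonneg (y - y')]) (by linarith [abs_nonneg (x - x')])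

lemma mem_closure_of_vertical {Ω : Set (ℝ × ℝ)} {x p q : ℝ} (hpq : p < q)
    (h : ∀ y ∈ Ioo p q, (x, y) ∈ Ω) : ∀ y ∈ Icc p q, (x, y) ∈ closure Ω := by
  intro y hy
  rw [← closure_Ioo hpq.ne] at hy
  exact map_mem_closure (f := fun y => (x, y)) (by fun_prop) hy h

/-- Far-field behavior of monotone solutions of `Δψ = f(ψ)` in the nozzle: `ψ`
converges in `C¹_loc` to `φ̄₁` as `x₁ → −∞` and to `φ̄_{b−a}(· − a)` as `x₁ → +∞`. -/
theorem stmt17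
    (Q α : ℝ) (hQ : 0 < Q) (hα : α ∈ Set.Ioo (0 : ℝ) 1)
    (κ : ℝ → ℝ) (hκ : ∀ t ∈ Set.Icc (0 : ℝ) 1, κ (Q * (3 * t ^ 2 - 2 * t ^ 3)) = t)
    (f : ℝ → ℝ) (hf : ∀ s : ℝ, f s = 6 * Q * (1 - 2 * κ s))
    (h₀ h₁ : ℝ → ℝ)
    (hh₀ : ContDiff ℝ 2 h₀) (hh₁ : ContDiff ℝ 2 h₁)
    (hh₀α : ∃ C : ℝ, ∀ x y : ℝ, |deriv (deriv h₀) x - deriv (deriv h₀) y| ≤ C * |x - y| ^ α)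
    (hh₁α : ∃ C : ℝ, ∀ x y : ℝ, |deriv (deriv h₁) x - deriv (deriv h₁) y| ≤ C * |x - y| ^ α)
    (hlt : ∀ x₁ : ℝ, h₀ x₁ < h₁ x₁)
    (Lm Lp a b : ℝ) (hLm : Lm < 0) (hLp : 0 < Lp)
    (ha : 0 ≤ a) (hab : a < b) (hb : b ≤ 1)
    (hup : ∀ x₁ ≤ Lm, h₀ x₁ = 0 ∧ h₁ x₁ = 1)
    (hdown : ∀ x₁ ≥ Lp, h₀ x₁ = a ∧ h₁ x₁ = b)
    (Ω : Set (ℝ × ℝ)) (hΩ : Ω = {x : ℝ × ℝ | h₀ x.1 < x.2 ∧ x.2 < h₁ x.1})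
    (ψ : ℝ × ℝ → ℝ)
    (hC2 : ContDiffOn ℝ 2 ψ Ω)
    (hLip : ∃ K, LipschitzOnWith K ψ (closure Ω))
    (hbd : ∀ x ∈ Ω, 0 ≤ ψ x ∧ ψ x ≤ Q)
    (heq : ∀ x ∈ Ω, lap ψ x = f (ψ x))
    (hΓ₀ : ∀ x₁ : ℝ, ψ (x₁, h₀ x₁) = 0)
    (hΓ₁ : ∀ x₁ : ℝ, ψ (x₁, h₁ x₁) = Q)
    (hmono : ∀ x ∈ Ω, 0 ≤ pd2 ψ x)
    (φ1 : ℝ → ℝ) (hφ1 : ∀ t : ℝ, φ1 t = Q * (3 * t ^ 2 - 2 * t ^ 3))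
    (φba : ℝ → ℝ) (hφba : IsBVPSol Q f (b - a) φba) :
    (∀ K : Set ℝ, K ⊆ Set.Ioo (0 : ℝ) 1 → IsCompact K →
      ∀ ε > 0, ∃ M : ℝ, ∀ x₁ ≤ M, ∀ x₂ ∈ K,
        |ψ (x₁, x₂) - φ1 x₂| + |pd2 ψ (x₁, x₂) - deriv φ1 x₂| < ε) ∧
    (∀ K : Set ℝ, K ⊆ Set.Ioo a b → IsCompact K →
      ∀ ε > 0, ∃ M : ℝ, ∀ x₁ ≥ M, ∀ x₂ ∈ K,
        |ψ (x₁, x₂) - φba (x₂ - a)| + |pd2 ψ (x₁, x₂) - deriv φba (x₂ - a)| < ε) := by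
  have hodd := isOddDecreasing_of_cubic hQ hκ hf
  have hopen : IsOpen Ω := by
    rw [hΩ]
    exact (isOpen_lt (hh₀.continuous.comp continuous_fst) continuous_snd).inter
      (isOpen_lt continuous_snd (hh₁.continuous.comp continuous_fst))
  have hcd : ∀ z ∈ Ω, ContDiffAt ℝ 2 ψ z := fun z hz => hC2.contDiffAt (hopen.mem_nhds hz)
  have hlap : ∀ x y, (x, y) ∈ Ω → HasLaplacianAt (fun x y => ψ (x, y)) (f (ψ (x, y))) x y := by
    intro x y hz
    rw [← heq _ hz]
    exact (hcd _ hz).hasLaplacianAt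
  have hpd2 : ∀ x y, (x, y) ∈ Ω → HasDerivAt (fun s => ψ (x, s)) (pd2 ψ (x, y)) y :=
    fun x y hz => ((hcd _ hz).differentiableAt (by simp)).hasDerivAt_pd2
  obtain ⟨K, hK⟩ := hLip
  have hmemΩ : ∀ x y, (x, y) ∈ Ω ↔ h₀ x < y ∧ y < h₁ x := fun x y => by rw [hΩ]; rfl
  have hcl : ∀ x, ∀ y ∈ Icc (h₀ x) (h₁ x), (x, y) ∈ closure Ω := fun x =>
    mem_closure_of_vertical (hlt x) fun y hy => (hmemΩ x y).2 hy
  have hrange : ∀ x, ∀ y ∈ Icc (h₀ x) (h₁ x), ψ (x, y) ∈ Icc 0 Q := by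
    intro x y hy
    rcases eq_or_lt_of_le hy.1 with rfl | h1
    · rw [hΓ₀]; exact ⟨le_rfl, hQ.le⟩
    rcases eq_or_lt_of_le hy.2 with rfl | h2
    · rw [hΓ₁]; exact ⟨hQ.le, le_rfl⟩
    exact hbd _ ((hmemΩ x y).2 ⟨h1, h2⟩)
  constructor
  · have hstrip : ∀ x ≥ -Lm, h₀ (-x) = 0 ∧ h₁ (-x) = 1 := fun x hx => hup _ (by linarith)
    have hIcc : ∀ x ≥ -Lm, ∀ y ∈ Icc (0 : ℝ) 1, y ∈ Icc (h₀ (-x)) (h₁ (-x)) := by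
      intro x hx y hy
      rwa [(hstrip x hx).1, (hstrip x hx).2]
    have hIoo : ∀ x ≥ -Lm, ∀ y ∈ Ioo (0 : ℝ) 1, (-x, y) ∈ Ω := by
      intro x hx y hy
      rw [hmemΩ, (hstrip x hx).1, (hstrip x hx).2]
      exact hy
    have hsol : IsHalfStripSol f Q 1 (-Lm) K fun x y => ψ (-x, y) :=
      { lip := fun x hx x' hx' y hy y' hy' => by
          have := hK.abs_sub_le (hcl _ _ (hIcc x hx y hy)) (hcl _ _ (hIcc x' hx' y' hy'))
          rwa [neg_sub_neg, abs_sub_comm x'] at this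
        mem := fun x hx y hy => hrange _ _ (hIcc x hx y hy)
        eqn := fun x hx y hy => by
          obtain ⟨A, B, hA, hB, hAB⟩ := hlap _ _ (hIoo x hx.le y hy)
          have hA' : HasSecondDerivAt (fun s => ψ (s, y)) A (0 - x) := by rwa [zero_sub]
          exact ⟨A, B, by simpa using hA'.comp_const_sub 0, hB, hAB⟩
        bot := fun x hx => by simpa [(hstrip x hx).1] using hΓ₀ (-x)
        top := fun x hx => by simpa [(hstrip x hx).2] using hΓ₁ (-x) }
    obtain rfl : φ1 = fun t => Q * (3 * t ^ 2 - 2 * t ^ 3) := funext hφ1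
    have hprof := isProfile_cubic hQ hκ hf
    intro S hS hSc ε hε
    obtain ⟨M, hM⟩ := eventually_atTop.1 ((hsol.eventually_C1_close one_pos K.2 hodd hprof hS
      hSc hε).and (eventually_ge_atTop (-Lm)))
    refine ⟨-M, fun x hx y hy => ?_⟩
    obtain ⟨h1, h2⟩ := hM (-x) (by linarith)
    have hΩ' := hIoo (-x) h2 y (hS hy)
    simpa using h1 y hy _ _ (hpd2 _ _ hΩ') (hprof.eqn y (hS hy)).differentiableAt.hasDerivAt
  · have hIcc : ∀ x ≥ Lp, ∀ y ∈ Icc 0 (b - a), a + y ∈ Icc (h₀ x) (h₁ x) := by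
      intro x hx y hy
      rw [(hdown x hx).1, (hdown x hx).2]
      exact ⟨by linarith [hy.1], by linarith [hy.2]⟩
    have hIoo : ∀ x ≥ Lp, ∀ y ∈ Ioo 0 (b - a), (x, a + y) ∈ Ω := by
      intro x hx y hy
      rw [hmemΩ, (hdown x hx).1, (hdown x hx).2]
      exact ⟨by linarith [hy.1], by linarith [hy.2]⟩
    have hsol : IsHalfStripSol f Q (b - a) Lp K fun x y => ψ (x, a + y) :=
      { lip := fun x hx x' hx' y hy y' hy' => by
          have := hK.abs_sub_le (hcl _ _ (hIcc x hx y hy)) (hcl _ _ (hIcc x' hx' y' hy'))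
          rwa [add_sub_add_left_eq_sub] at this
        mem := fun x hx y hy => hrange _ _ (hIcc x hx y hy)
        eqn := fun x hx y hy => by
          obtain ⟨A, B, hA, hB, hAB⟩ := hlap _ _ (hIoo x hx.le y hy)
          exact ⟨A, B, hA, hB.comp_const_add a, hAB⟩
        bot := fun x hx => by simpa [(hdown x hx).1] using hΓ₀ x
        top := fun x hx => by simpa [(hdown x hx).2] using hΓ₁ x }
    have hprof := hφba.isProfile
    intro S hS hSc ε hε
    have hS' : (fun y => y - a) '' S ⊆ Ioo 0 (b - a) := by
      rintro _ ⟨y, hy, rfl⟩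
      exact ⟨by linarith [(hS hy).1], by linarith [(hS hy).2]⟩
    obtain ⟨M, hM⟩ := eventually_atTop.1 ((hsol.eventually_C1_close (sub_pos.2 hab) K.2 hodd
      hprof hS' (hSc.image (by fun_prop)) hε).and (eventually_ge_atTop Lp))
    refine ⟨M, fun x hx y hy => ?_⟩
    obtain ⟨h1, h2⟩ := hM x hx
    have hy' := mem_image_of_mem (fun y => y - a) hy
    have hΩ' := hIoo x h2 _ (hS' hy')
    simpa using h1 _ hy' _ _ ((hpd2 _ _ hΩ').comp_const_add a _)
      (hprof.eqn _ (hS' hy')).differentiableAt.hasDerivAt
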